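/- Linear-program characterization of sub-symmetric witnesses: let G = (V, E) be a finite connected simple graph with at least two vertices, d ≥ 2 an integer, and W = Σ_{T⊆E} w_T P_T with real coefficients w_T. Then the following are equivalent. (i) For every nonempty proper subset S ⊂ V there exists a positive semidefinite matrix Q_S on the total space with Q_S^{Γ_{∂S}} ⪯ W. (ii) For every nonempty proper subset S ⊂ V there exist real numbers q_T(S) with q_T(S) ≤ w_T for all T ⊆ E, such that for every T̃ ⊆ E ∖ ∂S and every function s : ∂S → {0,1}, Σ_{T ⊆ ∂S} q_{T∪T̃}(S) · ∏_{e∈T} (−1)^{s(e)} · ∏_{e∈∂S∖T} ((d−1) if s(e)=0 else (d+1)) ≥ 0. -/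

import Mathlib

open Matrix Finset
open scoped ComplexOrder

/-- The projector onto the maximally entangled state on `ℂ^d ⊗ ℂ^d`. -/
noncomputable def phiM (d : ℕ) : Matrix (Fin d × Fin d) (Fin d × Fin d) ℂ :=
  Matrix.of fun p q => if p.1 = p.2 ∧ q.1 = q.2 then (1 : ℂ) / d else 0

/-- `P_T = ⊗_{e∈T} Φ_e ⊗ ⊗_{e∉T} (I_e − Φ_e)` on the total space of the network. -/
noncomputable def PT (d : ℕ) (E : Type*) [Fintype E] [DecidableEq E] (T : Finset E) :
    Matrix (E → Fin d × Fin d) (E → Fin d × Fin d) ℂ :=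
  Matrix.of fun x y =>
    ∏ e, if e ∈ T then phiM d (x e) (y e) else (1 - phiM d) (x e) (y e)

/-- `Γ_K`: partial transpose of the first `ℂ^d` factor of every edge in `K`. -/
def ptK (d : ℕ) (E : Type*) [DecidableEq E] (K : Finset E)
    (M : Matrix (E → Fin d × Fin d) (E → Fin d × Fin d) ℂ) :
    Matrix (E → Fin d × Fin d) (E → Fin d × Fin d) ℂ :=
  Matrix.of fun x y =>
    M (fun e => if e ∈ K then ((y e).1, (x e).2) else x e)
      (fun e => if e ∈ K then ((x e).1, (y e).2) else y e)

/-- The edge boundary `∂S` of a vertex subset `S`, as a finite set of edges of `G`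
(the edges with exactly one endpoint in `S`). -/
def bdE {V : Type*} [Fintype V] [DecidableEq V] (G : SimpleGraph V) [DecidableRel G.Adj]
    (S : Finset V) : Finset ↥G.edgeSet :=
  Finset.univ.filter (fun e => (S.filter (fun v => v ∈ e.val)).card = 1)

/-!
On one edge, `span {Φ, I - Φ}` is the commutant of the unitaries `Ū ⊗ U`, and partial transposition
maps it onto `span {Π₊, Π₋}`, where `Π₊` and `Π₋` project onto the symmetric and the antisymmetric
subspace. Hence every `Γ_K (∑ q_T P_T)` is diagonal with respect to the resolution of the identity
into products of `Π₊`, `Π₋` (edges in `K`) and `Φ`, `I - Φ` (edges outside `K`), and its eigenvalues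
are, up to the factor `d ^ (-|K|)`, the linear forms of the linear program. So `q` being feasible
yields `Q = Γ_K (∑ q_T P_T)`. Conversely, given `Q`, the numbers `q_T = tr (Q^Γ P_T) / tr P_T` are
feasible: averaging `Q^Γ` over the symmetry group replaces it by `∑ q_T P_T` without changing its
pairing with `Γ_K R`, for `R` in the resolution, so the eigenvalue at `R` is a positive multiple of
`tr (Q R)`.
-/

section StarProjection

variable {n R : Type*} [Fintype n] [PartialOrder R]

lemma posSemidef_of_isStarProjection [Ring R] [StarRing R] [StarOrderedRing R]
    {P : Matrix n n R} (hP : IsStarProjection P) : P.PosSemidef := by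
  have hfactor : P = Pᴴ * P := by
    rw [← star_eq_conjTranspose, hP.isSelfAdjoint.star_eq, hP.isIdempotentElem.eq]
  rw [hfactor]
  exact posSemidef_conjTranspose_mul_self P

lemma trace_mul_nonneg_of_isStarProjection [CommRing R] [StarRing R] [StarOrderedRing R]
    {M P : Matrix n n R} (hM : M.PosSemidef) (hP : IsStarProjection P) : 0 ≤ (M * P).trace := by
  have hcompress : (M * P).trace = (P * M * Pᴴ).trace := by
    rw [← star_eq_conjTranspose, hP.isSelfAdjoint.star_eq, Matrix.mul_assoc, trace_mul_comm P,
      Matrix.mul_assoc, hP.isIdempotentElem.eq]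
  rw [hcompress]
  exact (hM.mul_mul_conjTranspose_same P).trace_nonneg

end StarProjection

section PiKronecker

variable {E n R : Type*} [Fintype E] [CommSemiring R]

/-- The tensor product `⨂ₑ A e` of a finite family of matrices, indexed by functions on `E`. -/
def piKronecker (A : E → Matrix n n R) : Matrix (E → n) (E → n) R :=
  of fun x y => ∏ e, A e (x e) (y e)

lemma piKronecker_smul (c : E → R) (A : E → Matrix n n R) :
    piKronecker (fun e => c e • A e) = (∏ e, c e) • piKronecker A := by
  ext x y
  simp [piKronecker, prod_mul_distrib]

lemma piKronecker_eq_zero {A : E → Matrix n n R} {e : E} (he : A e = 0) : piKronecker A = 0 := by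
  ext x y
  exact prod_eq_zero (mem_univ e) (by simp [he])

lemma piKronecker_one [DecidableEq n] :
    piKronecker (fun _ : E => (1 : Matrix n n R)) = 1 := by
  ext x y
  simp [piKronecker, one_apply, prod_ite_zero, funext_iff]

lemma piKronecker_sum_bool [DecidableEq E] (A : E → Bool → Matrix n n R) :
    piKronecker (fun e => ∑ b, A e b) =
      ∑ T : Finset E, piKronecker fun e => A e (decide (e ∈ T)) := by
  ext x y
  simp only [piKronecker, of_apply, Fintype.sum_bool, Matrix.sum_apply, Fintype.prod_add]
  refine sum_congr rfl fun T _ => ?_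
  rw [← prod_mul_prod_compl T fun e => A e (decide (e ∈ T)) (x e) (y e)]
  congr 1 <;> refine prod_congr rfl fun e he => ?_ <;> simp_all

lemma piKronecker_conjTranspose [StarRing R] (A : E → Matrix n n R) :
    (piKronecker A)ᴴ = piKronecker fun e => (A e)ᴴ := by
  ext x y
  simp [piKronecker, conjTranspose_apply]

variable [DecidableEq E] [Fintype n]

lemma piKronecker_mul (A B : E → Matrix n n R) :
    piKronecker A * piKronecker B = piKronecker fun e => A e * B e := by
  ext x y
  simp only [piKronecker, mul_apply, of_apply, ← prod_mul_distrib]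
  rw [prod_univ_sum, Fintype.piFinset_univ]

lemma trace_piKronecker (A : E → Matrix n n R) :
    (piKronecker A).trace = ∏ e, (A e).trace := by
  simp only [piKronecker, trace, diag_apply, of_apply]
  rw [prod_univ_sum, Fintype.piFinset_univ]

lemma isStarProjection_piKronecker [StarRing R] {A : E → Matrix n n R}
    (hA : ∀ e, IsStarProjection (A e)) : IsStarProjection (piKronecker A) where
  isIdempotentElem := by
    simp only [IsIdempotentElem, piKronecker_mul, (hA _).isIdempotentElem.eq]
  isSelfAdjoint := by
    simp only [isSelfAdjoint_iff, star_eq_conjTranspose, piKronecker_conjTranspose]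
    simp only [← star_eq_conjTranspose, (hA _).isSelfAdjoint.star_eq]

end PiKronecker

lemma sum_eq_sum_powerset_union {E M : Type*} [Fintype E] [DecidableEq E] [AddCommMonoid M]
    {K U : Finset E} (hU : U ⊆ Kᶜ) {f : Finset E → M} (hf : ∀ T, T \ K ≠ U → f T = 0) :
    ∑ T, f T = ∑ T ∈ K.powerset, f (T ∪ U) := by
  have hdisj : Disjoint U K := disjoint_left.2 fun e he => mem_compl.1 (hU he)
  have hunion_sdiff : ∀ T ⊆ K, (T ∪ U) \ K = U := fun T hT => by
    rw [union_sdiff_distrib, sdiff_eq_empty_iff_subset.2 hT, empty_union, hdisj.sdiff_eq_left]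
  have hunion_inter : ∀ T ⊆ K, (T ∪ U) ∩ K = T := fun T hT => by
    rw [union_inter_distrib_right, inter_eq_left.2 hT, disjoint_iff_inter_eq_empty.1 hdisj,
      union_empty]
  rw [← sum_filter_of_ne (p := fun T => T \ K = U) fun T _ hT => by
    by_contra hne; exact hT (hf T hne)]
  refine sum_nbij' (· ∩ K) (· ∪ U) ?_ ?_ ?_ ?_ ?_
  · simp
  · simpa using hunion_sdiff
  · rintro T hT
    rw [← (mem_filter.1 hT).2, union_comm, sdiff_union_inter]
  · simpa using hunion_inter
  · rintro T hT
    rw [← (mem_filter.1 hT).2, union_comm, sdiff_union_inter]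

section Edge

/-- Transposition of the first tensor factor of a single edge. -/
def edgeTranspose {m n R : Type*} (A : Matrix (m × n) (m × n) R) : Matrix (m × n) (m × n) R :=
  of fun x y => A (y.1, x.2) (x.1, y.2)

/-- The flip operator `x ⊗ y ↦ y ⊗ x` on `ℂ^d ⊗ ℂ^d`. -/
def flipMatrix (d : ℕ) : Matrix (Fin d × Fin d) (Fin d × Fin d) ℂ :=
  Equiv.Perm.permMatrix ℂ (Equiv.prodComm (Fin d) (Fin d))

/-- The projection `Φ` (at `true`) and its complement `I - Φ` (at `false`). -/
noncomputable def entangledProj (d : ℕ) (b : Bool) : Matrix (Fin d × Fin d) (Fin d × Fin d) ℂ :=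
  if b then phiM d else 1 - phiM d

/-- The sign `(-1)^b`, which is the eigenvalue of the flip operator on `flipProj d b`. -/
def flipSign (b : Bool) : ℝ := if b then -1 else 1

/-- The projections of `ℂ^d ⊗ ℂ^d` onto the antisymmetric (at `true`) and the symmetric
(at `false`) subspace. -/
noncomputable def flipProj (d : ℕ) (b : Bool) : Matrix (Fin d × Fin d) (Fin d × Fin d) ℂ :=
  (1 / 2 : ℂ) • (1 + (flipSign b : ℂ) • flipMatrix d)

variable {d : ℕ}

lemma flipMatrix_apply (x y : Fin d × Fin d) :
    flipMatrix d x y = if x.2 = y.1 ∧ x.1 = y.2 then 1 else 0 := by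
  simp [flipMatrix, PEquiv.toMatrix_apply, Prod.ext_iff, eq_comm]

lemma flipMatrix_mul_self : flipMatrix d * flipMatrix d = 1 := by
  rw [flipMatrix, ← permMatrix_mul]
  exact permMatrix_one

lemma trace_flipMatrix : (flipMatrix d).trace = d := by
  simp only [trace, diag_apply, flipMatrix_apply, Fintype.sum_prod_type, eq_comm, and_self]
  simp

lemma flipSign_sq (b : Bool) : (flipSign b : ℂ) * flipSign b = 1 := by
  cases b <;> simp [flipSign]

lemma flipMatrix_mul_flipProj (b : Bool) :
    flipMatrix d * flipProj d b = (flipSign b : ℂ) • flipProj d b := by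
  have hflip : flipMatrix d * (1 + (flipSign b : ℂ) • flipMatrix d) =
      (flipSign b : ℂ) • (1 + (flipSign b : ℂ) • flipMatrix d) := by
    rw [Matrix.mul_add, Matrix.mul_one, mul_smul_comm, flipMatrix_mul_self, smul_add, smul_smul,
      flipSign_sq, one_smul, add_comm]
  rw [flipProj, mul_smul_comm, hflip, smul_comm]

lemma isStarProjection_flipProj (b : Bool) : IsStarProjection (flipProj d b) where
  isIdempotentElem := by
    have hhalf : (1 + (flipSign b : ℂ) • flipMatrix d) * flipProj d b = (2 : ℂ) • flipProj d b := by
      rw [Matrix.add_mul, Matrix.one_mul, smul_mul_assoc, flipMatrix_mul_flipProj, smul_smul,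
        flipSign_sq, one_smul, two_smul]
    rw [IsIdempotentElem]
    nth_rw 1 [flipProj]
    rw [smul_mul_assoc, hhalf, smul_smul]
    norm_num
  isSelfAdjoint := by
    have hflip : (flipMatrix d)ᴴ = flipMatrix d := conjTranspose_permMatrix _
    simp [isSelfAdjoint_iff, star_eq_conjTranspose, flipProj, hflip]

lemma trace_phiM (hd : d ≠ 0) : (phiM d).trace = 1 := by
  simp [phiM, trace, Fintype.sum_prod_type, hd]

lemma isStarProjection_phiM : IsStarProjection (phiM d) where
  isIdempotentElem := by
    ext x y
    have hd : (d : ℂ) ≠ 0 := Nat.cast_ne_zero.2 x.1.pos.ne'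
    by_cases hx : x.1 = x.2 <;> by_cases hy : y.1 = y.2 <;>
      simp [phiM, mul_apply, Fintype.sum_prod_type, hx, hy, hd]
  isSelfAdjoint := by
    ext x y
    simp only [phiM, star_apply, of_apply, and_comm (a := y.1 = y.2)]
    split_ifs <;> simp

lemma isStarProjection_entangledProj (b : Bool) : IsStarProjection (entangledProj d b) := by
  cases b
  · exact isStarProjection_phiM.one_sub
  · exact isStarProjection_phiM

lemma entangledProj_mul_of_ne {a b : Bool} (hab : a ≠ b) :
    entangledProj d a * entangledProj d b = 0 := by
  cases a <;> cases b <;> first | contradiction | simp only [entangledProj]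
  · exact isStarProjection_phiM.one_sub_mul_self
  · exact isStarProjection_phiM.mul_one_sub_self

lemma sum_entangledProj : ∑ b, entangledProj d b = 1 := by
  simp [entangledProj]

lemma sum_flipProj : ∑ b, flipProj d b = 1 := by
  have hsum : (1 + (flipSign true : ℂ) • flipMatrix d) + (1 + (flipSign false : ℂ) • flipMatrix d) =
      (2 : ℂ) • 1 := by
    simp [flipSign, two_smul, add_assoc]
  rw [Fintype.sum_bool, flipProj, flipProj, ← smul_add, hsum, smul_smul]
  norm_num

lemma trace_entangledProj_pos (hd : 2 ≤ d) (b : Bool) : 0 < (entangledProj d b).trace := by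
  cases b
  · have htrace : (entangledProj d false).trace = ((d * d - 1 : ℝ) : ℂ) := by
      simp [entangledProj, trace_phiM (by lia : d ≠ 0)]
    have hd' : (2 : ℝ) ≤ d := by exact_mod_cast hd
    rw [htrace, Complex.zero_lt_real]
    nlinarith
  · simp [entangledProj, trace_phiM (by lia : d ≠ 0)]

lemma trace_flipProj_pos (hd : 2 ≤ d) (b : Bool) : 0 < (flipProj d b).trace := by
  have htrace : (flipProj d b).trace = ((1 / 2 * (d * (d + flipSign b)) : ℝ) : ℂ) := by
    rw [flipProj, trace_smul, trace_add, trace_smul, trace_flipMatrix]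
    simp only [trace_one, Fintype.card_prod, Fintype.card_fin, smul_eq_mul]
    push_cast
    ring
  have hd' : (2 : ℝ) ≤ d := by exact_mod_cast hd
  have hsign : 0 < d + flipSign b := by cases b <;> simp [flipSign] <;> linarith
  rw [htrace, Complex.zero_lt_real]
  positivity

lemma edgeTranspose_phiM : edgeTranspose (phiM d) = (1 / d : ℂ) • flipMatrix d := by
  ext x y
  simp [edgeTranspose, phiM, flipMatrix_apply, eq_comm, and_comm]

lemma edgeTranspose_flipMatrix : edgeTranspose (flipMatrix d) = (d : ℂ) • phiM d := by
  ext x y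
  have hd : (d : ℂ) ≠ 0 := Nat.cast_ne_zero.2 x.1.pos.ne'
  simp [edgeTranspose, phiM, flipMatrix_apply, hd, eq_comm]

lemma edgeTranspose_one :
    edgeTranspose (1 : Matrix (Fin d × Fin d) (Fin d × Fin d) ℂ) = 1 := by
  ext x y
  simp [edgeTranspose, one_apply, Prod.ext_iff, eq_comm]

/-- The weight of an edge of the cut in the linear program: `d` times the eigenvalue of the partial
transpose of `entangledProj d t` on `flipProj d b`. -/
def edgeWeight (d : ℕ) (t b : Bool) : ℝ :=
  if t then flipSign b else d - flipSign b

lemma edgeTranspose_entangledProj_mul_flipProj (hd : d ≠ 0) (t b : Bool) :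
    edgeTranspose (entangledProj d t) * flipProj d b =
      (edgeWeight d t b / d : ℂ) • flipProj d b := by
  have hphi : edgeTranspose (phiM d) * flipProj d b = (flipSign b / d : ℂ) • flipProj d b := by
    rw [edgeTranspose_phiM, smul_mul_assoc, flipMatrix_mul_flipProj, smul_smul, one_div_mul_eq_div]
  cases t
  · have hsub : edgeTranspose (1 - phiM d) = 1 - edgeTranspose (phiM d) :=
      congrArg (· - edgeTranspose (phiM d)) edgeTranspose_one
    simp only [entangledProj, edgeWeight, Bool.false_eq_true, if_false, hsub, Matrix.sub_mul, hphi,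
      Matrix.one_mul]
    push_cast
    rw [sub_div, div_self (Nat.cast_ne_zero.2 hd), sub_smul, one_smul]
  · exact hphi

lemma edgeTranspose_flipProj_mem_span (b : Bool) :
    edgeTranspose (flipProj d b) ∈ Submodule.span ℂ (Set.range (entangledProj d)) := by
  have hphi := Submodule.subset_span (R := ℂ) (Set.mem_range_self (f := entangledProj d) true)
  have hcompl := Submodule.subset_span (R := ℂ) (Set.mem_range_self (f := entangledProj d) false)
  have hone : (1 : Matrix (Fin d × Fin d) (Fin d × Fin d) ℂ) ∈
      Submodule.span ℂ (Set.range (entangledProj d)) := by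
    rw [← sum_entangledProj, Fintype.sum_bool]
    exact add_mem hphi hcompl
  have htranspose : edgeTranspose (flipProj d b) =
      (1 / 2 : ℂ) • (1 + (flipSign b : ℂ) • (d : ℂ) • phiM d) := by
    rw [← edgeTranspose_flipMatrix, ← edgeTranspose_one]
    rfl
  rw [htranspose]
  exact Submodule.smul_mem _ _
    (add_mem hone (Submodule.smul_mem _ _ (Submodule.smul_mem _ _ hphi)))

end Edge

section Network

variable {d : ℕ} {E : Type*} [DecidableEq E]

lemma ptK_ptK (K : Finset E) (M : Matrix (E → Fin d × Fin d) (E → Fin d × Fin d) ℂ) :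
    ptK d E K (ptK d E K M) = M := by
  ext x y
  simp only [ptK, of_apply]
  congr 1 <;> funext e <;> split_ifs <;> rfl

lemma ptK_empty (M : Matrix (E → Fin d × Fin d) (E → Fin d × Fin d) ℂ) : ptK d E ∅ M = M := by
  ext x y
  simp [ptK]

lemma ptK_sum_smul {ι : Type*} (K : Finset E) (S : Finset ι) (c : ι → ℂ)
    (A : ι → Matrix (E → Fin d × Fin d) (E → Fin d × Fin d) ℂ) :
    ptK d E K (∑ i ∈ S, c i • A i) = ∑ i ∈ S, c i • ptK d E K (A i) := by
  ext x y
  simp [ptK, Matrix.sum_apply]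

/-- The linear form in `q` which the linear program for the cut `K` requires to be nonnegative at
the sign pattern `s` on `K` and the set `U` of edges outside `K`. -/
def cutForm (d : ℕ) (K : Finset E) (q : Finset E → ℝ) (U : Finset E) (s : E → Bool) : ℝ :=
  ∑ T ∈ K.powerset, q (T ∪ U) * ((∏ e ∈ T, (if s e then (-1 : ℝ) else 1)) *
    ∏ e ∈ K \ T, (if s e then ((d : ℝ) + 1) else ((d : ℝ) - 1)))

lemma cutForm_empty (q : Finset E → ℝ) (U : Finset E) (s : E → Bool) :
    cutForm d ∅ q U s = q U := by
  simp [cutForm]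

lemma prod_edgeWeight {K T : Finset E} (hT : T ⊆ K) (s : E → Bool) :
    ∏ e ∈ K, edgeWeight d (decide (e ∈ T)) (s e) =
      (∏ e ∈ T, (if s e then (-1 : ℝ) else 1)) *
        ∏ e ∈ K \ T, (if s e then ((d : ℝ) + 1) else ((d : ℝ) - 1)) := by
  rw [← prod_sdiff hT, mul_comm]
  congr 1 <;> refine prod_congr rfl fun e he => ?_
  · simp [edgeWeight, flipSign, he]
  · cases s e <;> simp [edgeWeight, flipSign, (mem_sdiff.1 he).2]

variable [Fintype E]

lemma ptK_piKronecker (K : Finset E) (A : E → Matrix (Fin d × Fin d) (Fin d × Fin d) ℂ) :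
    ptK d E K (piKronecker A) =
      piKronecker fun e => if e ∈ K then edgeTranspose (A e) else A e := by
  ext x y
  simp only [ptK, piKronecker, of_apply]
  refine prod_congr rfl fun e _ => ?_
  split_ifs <;> rfl

lemma trace_ptK_mul (K : Finset E) (M N : Matrix (E → Fin d × Fin d) (E → Fin d × Fin d) ℂ) :
    (ptK d E K M * N).trace = (M * ptK d E K N).trace := by
  let exchange (p : (E → Fin d × Fin d) × (E → Fin d × Fin d)) :
      (E → Fin d × Fin d) × (E → Fin d × Fin d) :=
    (fun e => if e ∈ K then ((p.2 e).1, (p.1 e).2) else p.1 e,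
      fun e => if e ∈ K then ((p.1 e).1, (p.2 e).2) else p.2 e)
  have hexchange : Function.Involutive exchange := fun p => by
    ext1 <;> funext e <;> simp only [exchange] <;> split_ifs <;> rfl
  simp only [trace, diag_apply, mul_apply, ← Fintype.sum_prod_type']
  refine Fintype.sum_equiv hexchange.toPerm _ _ fun p => ?_
  simp only [ptK, of_apply, Function.Involutive.coe_toPerm, exchange]
  congr 2 <;> funext e <;> split_ifs <;> rfl

lemma PT_eq_piKronecker (T : Finset E) :
    PT d E T = piKronecker fun e => entangledProj d (decide (e ∈ T)) := by
  ext x y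
  refine prod_congr rfl fun e _ => ?_
  by_cases he : e ∈ T <;> simp [entangledProj, he]

/-- The joint eigenprojections of the matrices `Γ_K P_T`: the (anti)symmetric projection
prescribed by `s` on the edges in `K`, and the factors of `P_U` on the edges outside `K`. -/
noncomputable def cutProj (d : ℕ) (K : Finset E) (s : E → Bool) (U : Finset E) :
    Matrix (E → Fin d × Fin d) (E → Fin d × Fin d) ℂ :=
  piKronecker fun e => if e ∈ K then flipProj d (s e) else entangledProj d (decide (e ∈ U))

lemma cutProj_empty (s : E → Bool) (U : Finset E) : cutProj d ∅ s U = PT d E U := by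
  simp [cutProj, PT_eq_piKronecker]

lemma isStarProjection_cutProj (K : Finset E) (s : E → Bool) (U : Finset E) :
    IsStarProjection (cutProj d K s U) := by
  refine isStarProjection_piKronecker fun e => ?_
  split_ifs
  · exact isStarProjection_flipProj _
  · exact isStarProjection_entangledProj _

lemma isStarProjection_PT (T : Finset E) : IsStarProjection (PT d E T) :=
  cutProj_empty (d := d) (fun _ => false) T ▸ isStarProjection_cutProj _ _ _

lemma trace_cutProj_pos (hd : 2 ≤ d) (K : Finset E) (s : E → Bool) (U : Finset E) :
    0 < (cutProj d K s U).trace := by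
  rw [cutProj, trace_piKronecker]
  refine prod_pos fun e _ => ?_
  split_ifs
  · exact trace_flipProj_pos hd _
  · exact trace_entangledProj_pos hd _

lemma trace_PT_pos (hd : 2 ≤ d) (T : Finset E) : 0 < (PT d E T).trace :=
  cutProj_empty (d := d) (fun _ => false) T ▸ trace_cutProj_pos hd _ _ _

lemma sum_cutProj (K : Finset E) :
    ∑ N : Finset E, cutProj d K (fun e => decide (e ∈ N)) (N \ K) = 1 := by
  have hfactor : ∀ N : Finset E, cutProj d K (fun e => decide (e ∈ N)) (N \ K) =
      piKronecker fun e => (fun b => if e ∈ K then flipProj d b else entangledProj d b)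
        (decide (e ∈ N)) := fun N => by
    refine congrArg piKronecker (funext fun e => ?_)
    by_cases he : e ∈ K <;> simp [he]
  simp only [hfactor]
  rw [← piKronecker_sum_bool fun e b => if e ∈ K then flipProj d b else entangledProj d b,
    ← piKronecker_one]
  refine congrArg piKronecker (funext fun e => ?_)
  split_ifs
  · exact sum_flipProj
  · exact sum_entangledProj

lemma ptK_PT_mul_cutProj (K T U : Finset E) (s : E → Bool) :
    ptK d E K (PT d E T) * cutProj d K s U = piKronecker fun e =>
      if e ∈ K then edgeTranspose (entangledProj d (decide (e ∈ T))) * flipProj d (s e)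
      else entangledProj d (decide (e ∈ T)) * entangledProj d (decide (e ∈ U)) := by
  rw [PT_eq_piKronecker, ptK_piKronecker, cutProj, piKronecker_mul]
  refine congrArg piKronecker (funext fun e => ?_)
  split_ifs <;> rfl

lemma ptK_PT_mul_cutProj_eq_zero {K T U : Finset E} (hU : U ⊆ Kᶜ) (hT : T \ K ≠ U)
    (s : E → Bool) : ptK d E K (PT d E T) * cutProj d K s U = 0 := by
  obtain ⟨e, heK, he⟩ : ∃ e, e ∉ K ∧ ¬(e ∈ T ↔ e ∈ U) := by
    by_contra! hcontra
    refine hT (Finset.ext fun e => ?_)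
    have hUK : e ∈ U → e ∉ K := fun heU => mem_compl.1 (hU heU)
    have hTU := hcontra e
    rw [mem_sdiff]
    tauto
  rw [ptK_PT_mul_cutProj]
  refine piKronecker_eq_zero (e := e) ?_
  rw [if_neg heK]
  exact entangledProj_mul_of_ne (by simpa using he)

lemma ptK_PT_union_mul_cutProj (hd : d ≠ 0) {K T U : Finset E} (hT : T ⊆ K) (hU : U ⊆ Kᶜ)
    (s : E → Bool) :
    ptK d E K (PT d E (T ∪ U)) * cutProj d K s U =
      (((∏ e ∈ K, edgeWeight d (decide (e ∈ T)) (s e)) / d ^ #K : ℝ) : ℂ) • cutProj d K s U := by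
  have hscalar : (((∏ e ∈ K, edgeWeight d (decide (e ∈ T)) (s e)) / d ^ #K : ℝ) : ℂ) =
      ∏ e, if e ∈ K then (edgeWeight d (decide (e ∈ T)) (s e) / d : ℂ) else 1 := by
    simp [prod_ite_mem, prod_div_distrib]
  rw [ptK_PT_mul_cutProj, hscalar, cutProj, ← piKronecker_smul]
  refine congrArg piKronecker (funext fun e => ?_)
  by_cases he : e ∈ K
  · have heU : e ∉ U := fun h => mem_compl.1 (hU h) he
    simp only [he, if_true, mem_union, heU, or_false]
    exact edgeTranspose_entangledProj_mul_flipProj hd _ _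
  · have heT : e ∉ T := fun h => he (hT h)
    simp only [he, if_false, mem_union, heT, false_or, one_smul]
    exact (isStarProjection_entangledProj _).isIdempotentElem.eq

lemma ptK_sum_smul_PT_mul_cutProj (hd : d ≠ 0) {K U : Finset E} (hU : U ⊆ Kᶜ)
    (q : Finset E → ℝ) (s : E → Bool) :
    ptK d E K (∑ T, (q T : ℂ) • PT d E T) * cutProj d K s U =
      ((cutForm d K q U s / d ^ #K : ℝ) : ℂ) • cutProj d K s U := by
  rw [ptK_sum_smul, Matrix.sum_mul, sum_eq_sum_powerset_union hU fun T hT => by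
    rw [smul_mul_assoc, ptK_PT_mul_cutProj_eq_zero hU hT, smul_zero]]
  simp only [cutForm, sum_div, Complex.ofReal_sum, sum_smul]
  refine sum_congr rfl fun T hT => ?_
  rw [smul_mul_assoc, ptK_PT_union_mul_cutProj hd (mem_powerset.1 hT) hU,
    prod_edgeWeight (mem_powerset.1 hT), smul_smul, ← Complex.ofReal_mul, ← mul_div_assoc]

lemma sum_smul_PT_mul_PT (hd : d ≠ 0) (q : Finset E → ℝ) (T : Finset E) :
    (∑ T₁, (q T₁ : ℂ) • PT d E T₁) * PT d E T = (q T : ℂ) • PT d E T := by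
  simpa [ptK_empty, cutProj_empty, cutForm_empty] using
    ptK_sum_smul_PT_mul_cutProj hd (K := ∅) (U := T) (by simp) q fun _ => false

lemma ptK_cutProj_mem_span (K : Finset E) (s : E → Bool) (U : Finset E) :
    ptK d E K (cutProj d K s U) ∈ Submodule.span ℂ (Set.range (PT d E)) := by
  have hfactor : ∀ e, (if e ∈ K then edgeTranspose (flipProj d (s e))
      else entangledProj d (decide (e ∈ U))) ∈ Submodule.span ℂ (Set.range (entangledProj d)) := by
    intro e
    split_ifs
    · exact edgeTranspose_flipProj_mem_span _
    · exact Submodule.subset_span (Set.mem_range_self _)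
  simp only [Submodule.mem_span_range_iff_exists_fun] at hfactor
  choose c hc using hfactor
  have hexpand : ptK d E K (cutProj d K s U) =
      ∑ T : Finset E, (∏ e, c e (decide (e ∈ T))) • PT d E T := by
    simp only [PT_eq_piKronecker, ← piKronecker_smul]
    rw [← piKronecker_sum_bool fun e b => c e b • entangledProj d b, cutProj, ptK_piKronecker]
    refine congrArg piKronecker (funext fun e => ?_)
    rw [hc]
    split_ifs <;> rfl
  rw [hexpand]
  exact Submodule.sum_mem _ fun T _ =>
    Submodule.smul_mem _ _ (Submodule.subset_span (Set.mem_range_self T))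

lemma trace_mul_eq_of_mem_span_PT {A B Y : Matrix (E → Fin d × Fin d) (E → Fin d × Fin d) ℂ}
    (hAB : ∀ T, (A * PT d E T).trace = (B * PT d E T).trace)
    (hY : Y ∈ Submodule.span ℂ (Set.range (PT d E))) : (A * Y).trace = (B * Y).trace := by
  induction hY using Submodule.span_induction with
  | mem Y hY => obtain ⟨T, rfl⟩ := hY; exact hAB T
  | zero => simp
  | add X Y _ _ hX hY => rw [Matrix.mul_add, Matrix.mul_add, trace_add, trace_add, hX, hY]
  | smul c Y _ hY => rw [mul_smul_comm, mul_smul_comm, trace_smul, trace_smul, hY]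

lemma cutForm_nonneg_of_trace_eq (hd : 2 ≤ d) {K U : Finset E} (hU : U ⊆ Kᶜ)
    {Q : Matrix (E → Fin d × Fin d) (E → Fin d × Fin d) ℂ} (hQ : Q.PosSemidef) {q : Finset E → ℝ}
    (hq : ∀ T, (q T : ℂ) * (PT d E T).trace = (ptK d E K Q * PT d E T).trace) (s : E → Bool) :
    0 ≤ cutForm d K q U s := by
  set R := cutProj d K s U
  have hpairing : ((cutForm d K q U s / d ^ #K : ℝ) : ℂ) * R.trace = (Q * R).trace := calc
    _ = (ptK d E K (∑ T, (q T : ℂ) • PT d E T) * R).trace := by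
      rw [ptK_sum_smul_PT_mul_cutProj (by lia) hU, trace_smul, smul_eq_mul]
    _ = ((∑ T, (q T : ℂ) • PT d E T) * ptK d E K R).trace := trace_ptK_mul _ _ _
    _ = (ptK d E K Q * ptK d E K R).trace := by
      refine trace_mul_eq_of_mem_span_PT (fun T => ?_) (ptK_cutProj_mem_span K s U)
      rw [sum_smul_PT_mul_PT (by lia), trace_smul, smul_eq_mul, hq]
    _ = (Q * R).trace := by rw [trace_ptK_mul, ptK_ptK]
  have hnonneg : 0 ≤ ((cutForm d K q U s / d ^ #K : ℝ) : ℂ) * R.trace :=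
    hpairing ▸ trace_mul_nonneg_of_isStarProjection hQ (isStarProjection_cutProj K s U)
  have heigenvalue : 0 ≤ cutForm d K q U s / d ^ #K := Complex.zero_le_real.1 <|
    le_of_mul_le_mul_right (by rwa [zero_mul]) (trace_cutProj_pos hd K s U)
  have hdpow : (0 : ℝ) < d ^ #K := by positivity
  simpa using (le_div_iff₀ hdpow).1 heigenvalue

lemma exists_le_trace_eq_of_posSemidef_sub (hd : 2 ≤ d) {w : Finset E → ℝ}
    {M : Matrix (E → Fin d × Fin d) (E → Fin d × Fin d) ℂ}
    (hM : ((∑ T, (w T : ℂ) • PT d E T) - M).PosSemidef) :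
    ∃ q : Finset E → ℝ, (∀ T, q T ≤ w T) ∧
      ∀ T, (q T : ℂ) * (PT d E T).trace = (M * PT d E T).trace := by
  have hle : ∀ T, (M * PT d E T).trace / (PT d E T).trace ≤ w T := fun T => by
    have hnonneg := trace_mul_nonneg_of_isStarProjection hM (isStarProjection_PT T)
    rw [Matrix.sub_mul, trace_sub, sum_smul_PT_mul_PT (by lia), trace_smul, smul_eq_mul,
      sub_nonneg] at hnonneg
    exact (div_le_iff₀ (trace_PT_pos hd T)).2 hnonneg
  refine ⟨fun T => ((M * PT d E T).trace / (PT d E T).trace).re,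
    fun T => (Complex.le_def.1 (hle T)).1, fun T => ?_⟩
  have hreal : ((((M * PT d E T).trace / (PT d E T).trace).re : ℝ) : ℂ) =
      (M * PT d E T).trace / (PT d E T).trace :=
    Complex.ext rfl (Complex.le_def.1 (hle T)).2.symm
  rw [hreal, div_mul_cancel₀ _ (trace_PT_pos hd T).ne']

lemma posSemidef_ptK_sum_smul_PT (hd : d ≠ 0) {K : Finset E} {q : Finset E → ℝ}
    (hq : ∀ U ⊆ Kᶜ, ∀ s, 0 ≤ cutForm d K q U s) :
    (ptK d E K (∑ T, (q T : ℂ) • PT d E T)).PosSemidef := by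
  have hsdiff : ∀ N : Finset E, N \ K ⊆ Kᶜ := fun N e he => mem_compl.2 (mem_sdiff.1 he).2
  rw [← Matrix.mul_one (ptK d E K _), ← sum_cutProj K, Matrix.mul_sum]
  simp only [ptK_sum_smul_PT_mul_cutProj hd (hsdiff _)]
  refine posSemidef_sum _ fun N _ => ?_
  refine (posSemidef_of_isStarProjection (isStarProjection_cutProj _ _ _)).smul ?_
  exact Complex.zero_le_real.2 (div_nonneg (hq _ (hsdiff N) _) (by positivity))

lemma posSemidef_sum_smul_PT_sub {w q : Finset E → ℝ} (hqw : ∀ T, q T ≤ w T) :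
    ((∑ T, (w T : ℂ) • PT d E T) - ∑ T, (q T : ℂ) • PT d E T).PosSemidef := by
  simp only [← sum_sub_distrib, ← sub_smul, ← Complex.ofReal_sub]
  refine posSemidef_sum _ fun T _ => ?_
  refine (posSemidef_of_isStarProjection (isStarProjection_PT T)).smul ?_
  exact Complex.zero_le_real.2 (sub_nonneg.2 (hqw T))

theorem stmt_7_general (hd : 2 ≤ d) (K : Finset E) (w : Finset E → ℝ) :
    (∃ Q : Matrix (E → Fin d × Fin d) (E → Fin d × Fin d) ℂ, Q.PosSemidef ∧
      ((∑ T, (w T : ℂ) • PT d E T) - ptK d E K Q).PosSemidef) ↔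
    ∃ q : Finset E → ℝ, (∀ T, q T ≤ w T) ∧ ∀ U ⊆ Kᶜ, ∀ s, 0 ≤ cutForm d K q U s := by
  constructor
  · rintro ⟨Q, hQ, hWQ⟩
    obtain ⟨q, hqw, hq⟩ := exists_le_trace_eq_of_posSemidef_sub hd hWQ
    exact ⟨q, hqw, fun U hU s => cutForm_nonneg_of_trace_eq hd hU hQ hq s⟩
  · rintro ⟨q, hqw, hq⟩
    refine ⟨ptK d E K (∑ T, (q T : ℂ) • PT d E T), posSemidef_ptK_sum_smul_PT (by lia) hq, ?_⟩
    rw [ptK_ptK]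
    exact posSemidef_sum_smul_PT_sub hqw

end Network

/-- Linear-program characterization of sub-symmetric witnesses:
for `W = Σ_T w_T P_T`, full decomposability with respect to all cuts `∂S` is equivalent to the
existence of real numbers `q_T(S) ≤ w_T` satisfying the stated linear inequalities. -/
theorem stmt_7 (d : ℕ) (hd : 2 ≤ d) (V : Type*) [Fintype V] [DecidableEq V]
    (G : SimpleGraph V) [DecidableRel G.Adj] (hconn : G.Connected)
    (hV : 2 ≤ Fintype.card V) (w : Finset ↥G.edgeSet → ℝ) :
    (∀ S : Finset V, S.Nonempty → S ≠ Finset.univ →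
      ∃ Q : Matrix (↥G.edgeSet → Fin d × Fin d) (↥G.edgeSet → Fin d × Fin d) ℂ,
        Q.PosSemidef ∧
        ((∑ T : Finset ↥G.edgeSet, (w T : ℂ) • PT d ↥G.edgeSet T)
          - ptK d ↥G.edgeSet (bdE G S) Q).PosSemidef)
    ↔
    (∀ S : Finset V, S.Nonempty → S ≠ Finset.univ →
      ∃ q : Finset ↥G.edgeSet → ℝ, (∀ T, q T ≤ w T) ∧
        ∀ Ttil : Finset ↥G.edgeSet, Ttil ⊆ (bdE G S)ᶜ →
        ∀ s : ↥G.edgeSet → Bool,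
          0 ≤ ∑ T ∈ (bdE G S).powerset,
            q (T ∪ Ttil) * ((∏ e ∈ T, (if s e then (-1 : ℝ) else 1)) *
              ∏ e ∈ bdE G S \ T, (if s e then ((d : ℝ) + 1) else ((d : ℝ) - 1)))) :=
  forall_congr' fun S => forall₂_congr fun _ _ => stmt_7_general hd (bdE G S) w
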